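/- Let ρ and ε be real numbers with 0 < ρ < ε ≤ 1/√3. Set ℓ = ⌈ ln(1/(ε²π_*)) / (4 ln(ε/ρ)) ⌉, k = ⌈ (1/ε)^{2ℓ} ⌉, and R = kℓ + 1, and suppose that the ℓ²→ℓ² operator norm of K̄^{2ℓ} is at most ρ^{2ℓ}. Then both of the symmetric matrices (5ε/2)·Π − (1/m)(Ξ∘A) and (5ε/2)·Π + (1/m)(Ξ∘A) are R-local sums of PSD matrices. In particular, for every x ∈ {−1,+1}^V one has |Σ_{u,v} Ξ_{uv}A_{uv}x_ux_v| ≤ (5ε/2)·m, so the fraction of satisfied constraints of the 2-XOR instance, (1/2) + (1/(2m))Σ_{u,v} Ξ_{uv}A_{uv}x_ux_v, is at most 1/2 + (5/4)ε. -/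

import Mathlib

section WeightedGraph

variable {V : Type*} [Fintype V] [DecidableEq V] [Nonempty V]

/-- The (weighted) degree `deg(u) = ∑_v A_{uv}` of a weighted graph `A`. -/
noncomputable def gdeg (A : Matrix V V ℝ) (u : V) : ℝ := ∑ v, A u v

/-- The total weight `m = ∑_u deg(u)`. -/
noncomputable def gm (A : Matrix V V ℝ) : ℝ := ∑ u, gdeg A u

/-- The stationary distribution `π(u) = deg(u)/m` of the random walk on `A`. -/
noncomputable def gpi (A : Matrix V V ℝ) (u : V) : ℝ := gdeg A u / gm A

/-- `π_* = min_u π(u)`. -/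
noncomputable def gpiStar (A : Matrix V V ℝ) : ℝ :=
  Finset.univ.inf' Finset.univ_nonempty (gpi A)

/-- The random-walk transition matrix `K = D⁻¹A`, i.e. `K_{uv} = A_{uv}/deg(u)`. -/
noncomputable def gK (A : Matrix V V ℝ) : Matrix V V ℝ :=
  Matrix.of fun u v => A u v / gdeg A u

/-- The `ℓ² → ℓ²` operator norm (spectral norm) of a real square matrix. -/
noncomputable def l2opNorm (M : Matrix V V ℝ) : ℝ :=
  ‖Matrix.toEuclideanCLM (𝕜 := ℝ) M‖

/-- A symmetric matrix `M` is an `R`-local sum of PSD matrices if it is a finite sum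
`M = ∑ i, M_i` of positive semidefinite matrices, each supported on a set `S_i` of at
most `R` rows/columns.  This is exactly derivability of `xᵀMx ≥ 0` in the `R`-local,
degree-2 static sum-of-squares proof system. -/
def IsLocalPSDSum (R : ℕ) (M : Matrix V V ℝ) : Prop :=
  ∃ (n : ℕ) (Ms : Fin n → Matrix V V ℝ) (Ss : Fin n → Finset V),
    M = ∑ i, Ms i ∧ (∀ i, (Ms i).PosSemidef) ∧ (∀ i, (Ss i).card ≤ R) ∧
    (∀ i u v, Ms i u v ≠ 0 → u ∈ Ss i ∧ v ∈ Ss i)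

end WeightedGraph

/-! Write `⟨x, y⟩ = ∑ u, π u * x u * y u`, so that `K̄` is self-adjoint and the two matrices are the
forms of the polynomials `5ε/2 ∓ X` evaluated at `K̄`. For `w = X / ε` and `w ^ (2l) ≤ 1`, the bound
`w ≤ 1` follows from a univariate sum of squares of the polynomials `1 - w` and
`w ^ j - w ^ (j + 2)`, `j + 1 < l`. The hypothesis on the operator norm makes the row sums of
`|K̄ ^ (2l)|` at most `ε ^ (2l)`, the loss of `√|V| ≤ π_* ^ (-1/2)` being absorbed by the choice of
`l`; diagonal dominance then gives `1 - w ^ (2l)` as a `2`-local sum.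

The squares of these polynomials in `K̄` are not local. However, `(K̄ ^ t x) u` is the mean of a
signed coordinate of `x` at the endpoint of a random walk of length `t` from `u`. Averaging `k`
independent walks for each monomial gives squares of linear forms in at most `2k + 1` coordinates,
whose expectation is the desired square plus the variances. Each variance is of order
`ε ^ (-2t) / k`, and `k ≥ ε ^ (-2l)` keeps their total contribution to the
bound on `w` at most `3/2`. -/

open Matrix Polynomial

section LocalPSDSum

variable {V : Type*} {R : ℕ}

lemma IsLocalPSDSum.mono {R' : ℕ} {M : Matrix V V ℝ} (hM : IsLocalPSDSum R M) (hR : R ≤ R') :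
    IsLocalPSDSum R' M := by
  obtain ⟨n, Ms, Ss, hsum, hpsd, hcard, hsupp⟩ := hM
  exact ⟨n, Ms, Ss, hsum, hpsd, fun i => (hcard i).trans hR, hsupp⟩

lemma IsLocalPSDSum.add {M N : Matrix V V ℝ} (hM : IsLocalPSDSum R M) (hN : IsLocalPSDSum R N) :
    IsLocalPSDSum R (M + N) := by
  obtain ⟨n, Ms, Ss, rfl, hpsd, hcard, hsupp⟩ := hM
  obtain ⟨n', Ns, Ts, rfl, hpsd', hcard', hsupp'⟩ := hN
  refine ⟨n + n', Fin.append Ms Ns, Fin.append Ss Ts, ?_, ?_, ?_, ?_⟩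
  · simp only [Fin.sum_univ_add, Fin.append_left, Fin.append_right]
  all_goals refine Fin.addCases (fun i => ?_) fun i => ?_
  all_goals simp only [Fin.append_left, Fin.append_right]
  exacts [hpsd i, hpsd' i, hcard i, hcard' i, hsupp i, hsupp' i]

lemma IsLocalPSDSum.smul {M : Matrix V V ℝ} (hM : IsLocalPSDSum R M) {c : ℝ} (hc : 0 ≤ c) :
    IsLocalPSDSum R (c • M) := by
  obtain ⟨n, Ms, Ss, rfl, hpsd, hcard, hsupp⟩ := hM
  exact ⟨n, fun i => c • Ms i, Ss, Finset.smul_sum, fun i => (hpsd i).smul hc, hcard,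
    fun i u v h => hsupp i u v (right_ne_zero_of_mul h)⟩

lemma IsLocalPSDSum.dotProduct_mulVec_nonneg [Fintype V] {M : Matrix V V ℝ} (hM : IsLocalPSDSum R M)
    (x : V → ℝ) : 0 ≤ x ⬝ᵥ (M *ᵥ x) := by
  obtain ⟨n, Ms, Ss, rfl, hpsd, -, -⟩ := hM
  rw [sum_mulVec, dotProduct_sum]
  exact Finset.sum_nonneg fun i _ => (hpsd i).dotProduct_mulVec_nonneg x

variable (V R) in
/-- The `R`-local sums of PSD matrices as a convex cone. -/
def localPSDCone : PointedCone ℝ (Matrix V V ℝ) where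
  carrier := {M | IsLocalPSDSum R M}
  zero_mem' := ⟨0, Fin.elim0, Fin.elim0, by simp, (·.elim0), (·.elim0), (·.elim0)⟩
  add_mem' hM hN := hM.add hN
  smul_mem' c _ hM := hM.smul c.2

lemma localPSDCone_mono {R' : ℕ} (hR : R ≤ R') : localPSDCone V R ≤ localPSDCone V R' :=
  fun _ hM => IsLocalPSDSum.mono hM hR

lemma vecMulVec_self_mem_localPSDCone [Finite V] {y : V → ℝ} {S : Finset V} (hy : ∀ v ∉ S, y v = 0)
    (hS : S.card ≤ R) : vecMulVec y y ∈ localPSDCone V R := by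
  refine ⟨1, fun _ => vecMulVec y y, fun _ => S, by simp,
    fun _ => posSemidef_vecMulVec_self_star y, fun _ => hS, fun _ u v h => ?_⟩
  exact ⟨not_imp_comm.1 (hy u) (left_ne_zero_of_mul h),
    not_imp_comm.1 (hy v) (right_ne_zero_of_mul h)⟩

variable [DecidableEq V]

lemma abs_smul_vecMulVec_sub_sign (a : ℝ) (u v : V) :
    |a| • vecMulVec (Pi.single u (1 : ℝ) - Pi.single v (SignType.sign a : ℝ))
        (Pi.single u 1 - Pi.single v (SignType.sign a : ℝ))
      = single u u |a| + single v v |a| - single u v a - single v u a := by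
  have hsign : Pi.single v (SignType.sign a : ℝ) = (SignType.sign a : ℝ) • Pi.single v (1 : ℝ) := by
    simp [← Pi.single_smul]
  have habs : |a| * (SignType.sign a * SignType.sign a) = |a| := by
    rw [← mul_assoc, abs_mul_sign, self_mul_sign]
  simp only [hsign, sub_vecMulVec, vecMulVec_sub, smul_vecMulVec, vecMulVec_smul,
    ← single_eq_single_vecMulVec_single, smul_sub, smul_single, smul_eq_mul, mul_one,
    abs_mul_sign, habs]
  abel

variable [Fintype V]

lemma sum_abs_smul_vecMulVec_sub_sign {M : Matrix V V ℝ} (hM : M.IsSymm) :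
    ∑ u, ∑ v, |M u v| • vecMulVec (Pi.single u (1 : ℝ) - Pi.single v (SignType.sign (M u v) : ℝ))
        (Pi.single u 1 - Pi.single v (SignType.sign (M u v) : ℝ))
      = (2 : ℝ) • (diagonal (fun u => ∑ v, |M u v|) - M) := by
  have habs : ∑ u, ∑ v, single u u |M u v| = diagonal fun u => ∑ v, |M u v| := by
    ext a b
    simp [Matrix.sum_apply, single_apply, diagonal_apply, ite_and, Finset.sum_ite_irrel]
  have habs' : ∑ u, ∑ v, single v v |M u v| = diagonal fun u => ∑ v, |M u v| := by
    rw [Finset.sum_comm, ← habs]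
    simp only [hM.apply]
  have hsymm : ∑ u, ∑ v, single v u (M u v) = M := by
    rw [Finset.sum_comm]
    simp only [hM.apply, ← matrix_eq_sum_single]
  simp only [abs_smul_vecMulVec_sub_sign, Finset.sum_sub_distrib, Finset.sum_add_distrib, habs,
    habs', hsymm, ← matrix_eq_sum_single]
  module

/-- Each entry `a` of `M` is absorbed by a form `(|a| / 2) (x_u ∓ x_v)²`. -/
lemma diagonal_sub_mem_localPSDCone {d : V → ℝ} {M : Matrix V V ℝ} (hM : M.IsSymm)
    (hd : ∀ u, ∑ v, |M u v| ≤ d u) (hR : 2 ≤ R) : diagonal d - M ∈ localPSDCone V R := by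
  have hdiag : diagonal (fun u => d u - ∑ v, |M u v|)
      = ∑ u, (d u - ∑ v, |M u v|) • vecMulVec (Pi.single u (1 : ℝ)) (Pi.single u 1) := by
    ext a b
    rcases eq_or_ne a b with rfl | hab <;>
      simp [Matrix.sum_apply, vecMulVec_apply, Pi.single_apply, *]
  have hsplit : diagonal d - M = diagonal (fun u => d u - ∑ v, |M u v|)
      + (1 / 2 : ℝ) • (2 : ℝ) • (diagonal (fun u => ∑ v, |M u v|) - M) := by
    rw [smul_smul, one_div, inv_mul_cancel₀ two_ne_zero, one_smul, ← diagonal_sub]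
    abel
  rw [hsplit, hdiag, ← sum_abs_smul_vecMulVec_sub_sign hM]
  refine add_mem (sum_mem fun u _ => PointedCone.smul_mem _ (sub_nonneg.2 (hd u)) ?_)
    (PointedCone.smul_mem _ (by positivity) (sum_mem fun u _ => sum_mem fun v _ =>
      PointedCone.smul_mem _ (abs_nonneg _) ?_))
  · refine vecMulVec_self_mem_localPSDCone (S := {u}) (fun w hw => ?_) (by simp; omega)
    exact Pi.single_eq_of_ne (by simpa using hw) _
  · refine vecMulVec_self_mem_localPSDCone (S := {u, v}) (fun w hw => ?_)
      (Finset.card_le_two.trans hR)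
    obtain ⟨hwu, hwv⟩ : w ≠ u ∧ w ≠ v := by simpa using hw
    simp [hwu, hwv]

end LocalPSDSum

section SecondMoment

variable {V Ω ι : Type*} [Fintype Ω]

/-- The mean of a random vector with finitely many outcomes `ω`, of value `Y ω` and weight `P ω`. -/
def weightedMean (P : Ω → ℝ) (Y : Ω → V → ℝ) : V → ℝ := ∑ ω, P ω • Y ω

/-- The covariance matrix `E[Y Yᵀ] - E[Y] E[Y]ᵀ` of a random vector `Y` with finitely many
outcomes `ω` of weight `P ω`. -/
def weightedCov (P : Ω → ℝ) (Y : Ω → V → ℝ) : Matrix V V ℝ :=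
  ∑ ω, P ω • vecMulVec (Y ω) (Y ω) - vecMulVec (weightedMean P Y) (weightedMean P Y)

lemma sum_smul_vecMulVec_add {P : Ω → ℝ} (hP : ∑ ω, P ω = 1) (Y : Ω → V → ℝ) (z : V → ℝ) :
    ∑ ω, P ω • vecMulVec (z + Y ω) (z + Y ω)
      = vecMulVec (z + weightedMean P Y) (z + weightedMean P Y) + weightedCov P Y := by
  have hmean (v : V) : weightedMean P Y v = ∑ ω, P ω * Y ω v := by simp [weightedMean]
  ext u v
  simp only [weightedCov, Matrix.add_apply, Matrix.sub_apply, Matrix.sum_apply, Matrix.smul_apply,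
    vecMulVec_apply, Pi.add_apply, smul_eq_mul, hmean]
  calc ∑ ω, P ω * ((z u + Y ω u) * (z v + Y ω v))
      = ∑ ω, (P ω * (z u * z v) + z u * (P ω * Y ω v) + P ω * Y ω u * z v
          + P ω * (Y ω u * Y ω v)) := Finset.sum_congr rfl fun ω _ => by ring
    _ = _ := by
        simp only [Finset.sum_add_distrib, ← Finset.sum_mul, ← Finset.mul_sum, hP]
        ring

/-- For independent `Y i`, the left-hand side is the second moment matrix of `y + ∑ i ∈ s, Y i`;
conditioning on the outcomes writes it as an average of rank-one matrices. -/
lemma vecMulVec_add_sum_weightedCov_mem_localPSDCone [Finite V] {P : ι → Ω → ℝ}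
    (hP0 : ∀ i ω, 0 ≤ P i ω) (hP1 : ∀ i, ∑ ω, P i ω = 1) {Y : ι → Ω → V → ℝ} {b : Ω → V}
    (hY : ∀ i ω, ∀ v ≠ b ω, Y i ω v = 0) (s : Finset ι) {y : V → ℝ} {S : Finset V}
    (hy : ∀ v ∉ S, y v = 0) :
    vecMulVec (y + ∑ i ∈ s, weightedMean (P i) (Y i)) (y + ∑ i ∈ s, weightedMean (P i) (Y i))
      + ∑ i ∈ s, weightedCov (P i) (Y i) ∈ localPSDCone V (S.card + s.card) := by
  classical
  induction s using Finset.induction_on generalizing y S with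
  | empty => simpa using vecMulVec_self_mem_localPSDCone hy le_rfl
  | insert i s hi ih =>
    set N := ∑ j ∈ s, weightedMean (P j) (Y j) with hN
    set Q := ∑ j ∈ s, weightedCov (P j) (Y j) with hQ
    have hcond (ω : Ω) : vecMulVec (y + N + Y i ω) (y + N + Y i ω) + Q
        ∈ localPSDCone V (S.card + (insert i s).card) := by
      have hsupp : ∀ v ∉ insert (b ω) S, (y + Y i ω) v = 0 := fun v hv => by
        obtain ⟨hvb, hvS⟩ : v ≠ b ω ∧ v ∉ S := by simpa using hv
        simp [hy v hvS, hY i ω v hvb]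
      rw [add_right_comm]
      refine localPSDCone_mono ?_ (ih hsupp)
      grind [Finset.card_insert_le]
    have haverage : ∑ ω, P i ω • (vecMulVec (y + N + Y i ω) (y + N + Y i ω) + Q)
        = vecMulVec (y + N + weightedMean (P i) (Y i)) (y + N + weightedMean (P i) (Y i))
          + weightedCov (P i) (Y i) + Q := by
      simp only [smul_add, Finset.sum_add_distrib, sum_smul_vecMulVec_add (hP1 i),
        ← Finset.sum_smul, hP1, one_smul]
    rw [Finset.sum_insert hi, Finset.sum_insert hi, ← hN, ← hQ, add_comm (weightedMean _ _),
      ← add_assoc, ← add_assoc, ← haverage]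
    exact sum_mem fun ω _ => PointedCone.smul_mem _ (hP0 i ω) (hcond ω)

end SecondMoment

section SignedPoint

variable {V : Type*}

/-- The law of a random signed point `(v, σ)`: the point `v` has probability `κ v`, and the sign `σ`
has conditional mean `β v / κ v`. -/
noncomputable def signedLaw (κ β : V → ℝ) (ω : V × ℤˣ) : ℝ := (κ ω.1 + (ω.2 : ℤ) * β ω.1) / 2

lemma signedLaw_nonneg {κ β : V → ℝ} (hβ : ∀ v, |β v| ≤ κ v) (ω : V × ℤˣ) :
    0 ≤ signedLaw κ β ω := by
  obtain ⟨v, σ⟩ := ω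
  obtain ⟨hlow, hupp⟩ := abs_le.1 (hβ v)
  rcases Int.units_eq_one_or σ with rfl | rfl <;> simp [signedLaw] <;> linarith

variable [Fintype V]

lemma sum_signedLaw (κ β : V → ℝ) : ∑ ω, signedLaw κ β ω = ∑ v, κ v := by
  simp only [signedLaw, Fintype.sum_prod_type]
  refine Finset.sum_congr rfl fun v _ => ?_
  simp [UnitsInt.univ]
  ring

variable [DecidableEq V]

/-- The signed point `(v, σ)` as the vector `σ e_v`. -/
def signedVec (ω : V × ℤˣ) : V → ℝ := Pi.single ω.1 ((ω.2 : ℤ) : ℝ)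

lemma weightedMean_signedVec (κ β : V → ℝ) (c : ℝ) :
    weightedMean (signedLaw κ β) (fun ω => c • signedVec ω) = c • β := by
  ext v
  simp [weightedMean, signedLaw, signedVec, Fintype.sum_prod_type, UnitsInt.univ, Pi.single_apply]
  ring

lemma weightedCov_signedVec (κ β : V → ℝ) (c : ℝ) :
    weightedCov (signedLaw κ β) (fun ω => c • signedVec ω)
      = c ^ 2 • (diagonal κ - vecMulVec β β) := by
  rw [weightedCov, weightedMean_signedVec, smul_sub, smul_vecMulVec, vecMulVec_smul, smul_smul,
    ← pow_two]
  congr 1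
  ext a b
  rcases eq_or_ne a b with rfl | hab
  · simp [Matrix.sum_apply, vecMulVec_apply, signedLaw, signedVec, Fintype.sum_prod_type,
      UnitsInt.univ, Pi.single_apply]
    ring
  · simp [Matrix.sum_apply, vecMulVec_apply, signedVec, Fintype.sum_prod_type,
      UnitsInt.univ, Pi.single_apply, hab]

end SignedPoint

section Certificate

lemma sum_range_pow_sub_pow_sq {S : Type*} [CommRing S] (w : S) (n : ℕ) :
    ∑ j ∈ Finset.range n, (w ^ j - w ^ (j + 2)) ^ 2 = (1 - w ^ 2) * (1 - w ^ (2 * n)) := by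
  induction n with
  | zero => simp
  | succ n ih => rw [Finset.sum_range_succ, ih]; ring

lemma sum_range_one_sub_sq_mul {S : Type*} [CommRing S] (w : S) (n : ℕ) :
    ∑ i ∈ Finset.range n, (1 - w ^ 2) * (1 - w ^ (2 * i)) + (1 - w ^ (2 * n))
      = n * (1 - w ^ 2) := by
  induction n with
  | zero => simp
  | succ n ih => rw [Finset.sum_range_succ, Nat.cast_succ, add_one_mul, ← ih]; ring

/-- A sum-of-squares proof that `w ^ (2 * (n + 1)) ≤ 1` implies `w ≤ 1`, made robust to errors `δ`
and `η j` in the squares: `1 - w ^ 2` is obtained from `1 - w ^ (2 * (n + 1))` by averaging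
`∑ j < i, (w ^ j - w ^ (j + 2)) ^ 2 = (1 - w ^ 2) * (1 - w ^ (2 * i))` over `i ≤ n`. -/
lemma algebraMap_sub_mem_of_sq_add_mem {S : Type*} [CommRing S] [Algebra ℝ S]
    {𝒞 : PointedCone ℝ S} (h𝒞 : ∀ a : ℝ, 0 ≤ a → algebraMap ℝ S a ∈ 𝒞) {w : S} {n : ℕ} {δ : ℝ}
    {η : ℕ → ℝ} (hη : ∀ j, 0 ≤ η j) (hδ : (1 - w) ^ 2 + algebraMap ℝ S δ ∈ 𝒞)
    (hsq : ∀ j < n, (w ^ j - w ^ (j + 2)) ^ 2 + algebraMap ℝ S (η j) ∈ 𝒞)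
    (hpow : 1 - w ^ (2 * (n + 1)) ∈ 𝒞) :
    algebraMap ℝ S (1 + (δ + ∑ j ∈ Finset.range n, η j) / 2) - w ∈ 𝒞 := by
  set B := ∑ j ∈ Finset.range n, η j with hB
  have hterm : ∀ i ∈ Finset.range (n + 1),
      (1 - w ^ 2) * (1 - w ^ (2 * i)) + algebraMap ℝ S B ∈ 𝒞 := fun i hi => by
    have hin : i ≤ n := Finset.mem_range_succ_iff.1 hi
    rw [hB, ← sum_range_pow_sub_pow_sq, ← Finset.sum_range_add_sum_Ico _ hin, map_add, map_sum,
      ← add_assoc, ← Finset.sum_add_distrib]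
    exact add_mem (sum_mem fun j hj => hsq j ((Finset.mem_range.1 hj).trans_le hin))
      (h𝒞 _ (Finset.sum_nonneg fun j _ => hη j))
  have hsquare : 1 - w ^ 2 + algebraMap ℝ S B ∈ 𝒞 := by
    have haverage : 1 - w ^ 2 + algebraMap ℝ S B = ((n + 1 : ℕ) : ℝ)⁻¹ •
        (∑ i ∈ Finset.range (n + 1), ((1 - w ^ 2) * (1 - w ^ (2 * i)) + algebraMap ℝ S B)
          + (1 - w ^ (2 * (n + 1)))) := by
      rw [Finset.sum_add_distrib, add_right_comm, sum_range_one_sub_sq_mul,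
        eq_inv_smul_iff₀ (Nat.cast_ne_zero.2 n.succ_ne_zero), Finset.sum_const, Finset.card_range,
        Nat.cast_smul_eq_nsmul, ← nsmul_eq_mul, ← smul_add]
    rw [haverage]
    exact PointedCone.smul_mem _ (by positivity) (add_mem (sum_mem hterm) hpow)
  have hsplit : algebraMap ℝ S (1 + (δ + B) / 2) - w = (1 / 2 : ℝ) •
      ((1 - w) ^ 2 + algebraMap ℝ S δ + (1 - w ^ 2 + algebraMap ℝ S B)) := by
    have hsq_add : (1 - w) ^ 2 + (1 - w ^ 2) = (2 : ℝ) • (1 - w) := by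
      rw [two_smul]
      ring
    rw [add_add_add_comm, hsq_add]
    simp only [Algebra.algebraMap_eq_smul_one]
    module
  rw [hsplit]
  exact PointedCone.smul_mem _ (by norm_num) (add_mem hδ hsquare)

lemma add_sum_range_pow_le {η : ℝ} (hη : 4 ≤ η) (n : ℕ) :
    η + ∑ j ∈ Finset.range n, (η ^ j + η ^ (j + 2)) ≤ 3 / 2 * η ^ (n + 1) := by
  induction n with
  | zero => simp; linarith
  | succ n ih =>
    have hstep : 0 ≤ η ^ n * (η ^ 2 / 2 - 3 / 2 * η - 1) :=
      mul_nonneg (by positivity) (by nlinarith)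
    rw [Finset.sum_range_succ, ← add_assoc]
    calc _ ≤ 3 / 2 * η ^ (n + 1) + (η ^ n + η ^ (n + 2)) := by gcongr
      _ ≤ 3 / 2 * η ^ (n + 1) + (η ^ n + η ^ (n + 2))
          + η ^ n * (η ^ 2 / 2 - 3 / 2 * η - 1) := le_add_of_nonneg_right hstep
      _ = 3 / 2 * η ^ (n + 1 + 1) := by ring

end Certificate

section SignedWalk

variable {V : Type*} [Fintype V] [DecidableEq V] {p : V → ℝ} {K Q : Matrix V V ℝ} {R k : ℕ}

/-- `Q` is the signed transition operator of a random walk with transition matrix `K` and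
stationary weights `p`, self-adjoint in the inner product weighted by `p`. -/
structure IsReversibleSignedWalk (p : V → ℝ) (K Q : Matrix V V ℝ) : Prop where
  nonneg (u : V) : 0 ≤ p u
  stochastic : K ∈ rowStochastic ℝ V
  stationary : p ᵥ* K = p
  abs_le (u v : V) : |Q u v| ≤ K u v
  isSymm : (diagonal p * Q).IsSymm

/-- The matrix of the quadratic form `x ↦ ⟨x, f(Q) x⟩` in the inner product weighted by `p`, as a
linear function of the polynomial `f`. -/
noncomputable def walkForm (p : V → ℝ) (Q : Matrix V V ℝ) : ℝ[X] →ₗ[ℝ] Matrix V V ℝ :=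
  LinearMap.mulLeft ℝ (diagonal p) ∘ₗ (aeval Q).toLinearMap

/-- The polynomials whose form `walkForm p Q` is an `R`-local sum of PSD matrices. -/
noncomputable def walkCone (p : V → ℝ) (Q : Matrix V V ℝ) (R : ℕ) : PointedCone ℝ ℝ[X] :=
  (localPSDCone V R).comap (walkForm p Q)

lemma walkForm_apply (p : V → ℝ) (Q : Matrix V V ℝ) (f : ℝ[X]) :
    walkForm p Q f = diagonal p * aeval Q f := rfl

lemma walkCone_mono {R' : ℕ} (hR : R ≤ R') : walkCone p Q R ≤ walkCone p Q R' :=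
  fun _ hf => localPSDCone_mono hR hf

lemma walkForm_C_apply (p : V → ℝ) (Q : Matrix V V ℝ) (a : ℝ) :
    walkForm p Q (C a) = a • diagonal p := by
  simp [walkForm_apply, Algebra.algebraMap_eq_smul_one]

namespace IsReversibleSignedWalk

lemma abs_pow_le (h : IsReversibleSignedWalk p K Q) (t : ℕ) (u v : V) :
    |(Q ^ t) u v| ≤ (K ^ t) u v := by
  induction t generalizing v with
  | zero => by_cases huv : u = v <;> simp [huv]
  | succ t ih =>
    rw [pow_succ, pow_succ, mul_apply, mul_apply]
    calc |∑ w, (Q ^ t) u w * Q w v| ≤ ∑ w, |(Q ^ t) u w| * |Q w v| := by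
          simpa only [abs_mul] using Finset.abs_sum_le_sum_abs (fun w => (Q ^ t) u w * Q w v) _
      _ ≤ ∑ w, (K ^ t) u w * K w v := by
          gcongr with w
          exacts [(abs_nonneg _).trans (ih w), ih w, h.abs_le w v]

lemma sum_abs_pow_le_one (h : IsReversibleSignedWalk p K Q) (t : ℕ) (u : V) :
    ∑ v, |(Q ^ t) u v| ≤ 1 :=
  (Finset.sum_le_sum fun v _ => h.abs_pow_le t u v).trans
    (sum_row_of_mem_rowStochastic (pow_mem h.stochastic t) u).le

lemma vecMul_pow (h : IsReversibleSignedWalk p K Q) (t : ℕ) : p ᵥ* K ^ t = p := by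
  induction t with
  | zero => simp
  | succ t ih => rw [pow_succ, ← vecMul_vecMul, ih, h.stationary]

lemma isSymm_walkForm (h : IsReversibleSignedWalk p K Q) (f : ℝ[X]) : (walkForm p Q f).IsSymm := by
  have hsemi : SemiconjBy (diagonal p) Q Qᵀ := by
    simpa [IsSymm, SemiconjBy] using h.isSymm.symm
  induction f using Polynomial.induction_on' with
  | add f g hf hg => simpa only [map_add] using hf.add hg
  | monomial t a =>
    have hpow : (diagonal p * Q ^ t).IsSymm := by
      simpa [IsSymm, SemiconjBy] using (hsemi.pow_right t).symm
    simpa [walkForm_apply, aeval_monomial, Algebra.algebraMap_eq_smul_one] using hpow.smul a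

lemma walkForm_sq (h : IsReversibleSignedWalk p K Q) (f : ℝ[X]) :
    walkForm p Q (f ^ 2) = ∑ u, p u • vecMulVec (aeval Q f u) (aeval Q f u) := by
  have hsymm : diagonal p * aeval Q f = (aeval Q f)ᵀ * diagonal p := by
    simpa [IsSymm, walkForm_apply] using (h.isSymm_walkForm f).symm
  rw [walkForm_apply, pow_two, map_mul, ← mul_assoc, hsymm]
  ext a b
  rw [mul_apply]
  simp only [mul_diagonal, transpose_apply, Matrix.sum_apply, Matrix.smul_apply, vecMulVec_apply,
    smul_eq_mul]
  exact Finset.sum_congr rfl fun u _ => by ring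

lemma walkForm_one_sub_X_pow (h : IsReversibleSignedWalk p K Q) (t : ℕ) :
    walkForm p Q (1 - X ^ (2 * t))
      = ∑ u, p u • (diagonal ((K ^ t) u) - vecMulVec ((Q ^ t) u) ((Q ^ t) u)) := by
  have hdiag : ∑ u, p u • diagonal ((K ^ t) u) = diagonal p := by
    conv_rhs => rw [← h.vecMul_pow t]
    ext a b
    rcases eq_or_ne a b with rfl | hab <;>
      simp [Matrix.sum_apply, vecMul, dotProduct, *]
  rw [map_sub, mul_comm 2 t, pow_mul, h.walkForm_sq]
  simp only [smul_sub, Finset.sum_sub_distrib, hdiag, map_pow, aeval_X]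
  simp [walkForm_apply]

/-- From a `p`-random root run independent walks, the `i`-th of length `t i`, and square
`a` times the coordinate of the root plus the sum of `c i` times the signed coordinates of the
endpoints. The terms `1 - X ^ (2 * t i)` are the variances of the walks. -/
lemma sq_add_variances_mem_walkCone (h : IsReversibleSignedWalk p K Q) {ι : Type*} [Fintype ι]
    (a : ℝ) (c : ι → ℝ) (t : ι → ℕ) :
    (C a + ∑ i, c i • X ^ t i) ^ 2 + ∑ i, c i ^ 2 • (1 - X ^ (2 * t i))
      ∈ walkCone p Q (Fintype.card ι + 1) := by
  have hrow (u : V) : aeval Q (C a + ∑ i, c i • X ^ t i) u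
      = Pi.single u a + ∑ i, c i • (Q ^ t i) u := by
    ext v
    simp [Matrix.add_apply, Matrix.sum_apply, algebraMap_matrix_apply, Pi.single_apply, eq_comm]
  have hroot (u : V) : vecMulVec (Pi.single u a + ∑ i, c i • (Q ^ t i) u)
          (Pi.single u a + ∑ i, c i • (Q ^ t i) u)
        + ∑ i, c i ^ 2 • (diagonal ((K ^ t i) u) - vecMulVec ((Q ^ t i) u) ((Q ^ t i) u))
      ∈ localPSDCone V (Fintype.card ι + 1) := by
    simpa only [weightedMean_signedVec, weightedCov_signedVec, Finset.card_singleton,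
      Finset.card_univ, add_comm 1] using vecMulVec_add_sum_weightedCov_mem_localPSDCone
        (P := fun i => signedLaw ((K ^ t i) u) ((Q ^ t i) u)) (Y := fun i ω => c i • signedVec ω)
        (b := Prod.fst) (fun i => signedLaw_nonneg (h.abs_pow_le (t i) u))
        (fun i => (sum_signedLaw _ _).trans
          (sum_row_of_mem_rowStochastic (pow_mem h.stochastic (t i)) u))
        (fun i ω v hv => by simp [signedVec, hv]) Finset.univ
        (y := Pi.single u a) (S := {u}) (fun v hv => Pi.single_eq_of_ne (by simpa using hv) _)
  have haverage : walkForm p Q ((C a + ∑ i, c i • X ^ t i) ^ 2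
        + ∑ i, c i ^ 2 • (1 - X ^ (2 * t i)))
      = ∑ u, p u • (vecMulVec (Pi.single u a + ∑ i, c i • (Q ^ t i) u)
          (Pi.single u a + ∑ i, c i • (Q ^ t i) u)
        + ∑ i, c i ^ 2 • (diagonal ((K ^ t i) u) - vecMulVec ((Q ^ t i) u) ((Q ^ t i) u))) := by
    simp only [map_add, map_sum, map_smul, h.walkForm_one_sub_X_pow, h.walkForm_sq, ← hrow,
      smul_add, Finset.smul_sum, Finset.sum_add_distrib, smul_comm (p _)]
    rw [Finset.sum_comm (s := .univ (α := V))]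
  rw [walkCone, PointedCone.mem_comap, haverage]
  exact sum_mem fun u _ => PointedCone.smul_mem _ (h.nonneg u) (hroot u)

lemma C_sub_mem_walkCone (h : IsReversibleSignedWalk p K Q) {a : ℝ} {f : ℝ[X]}
    (hf : ∀ u, ∑ v, |aeval Q f u v| ≤ a) (hR : 2 ≤ R) : C a - f ∈ walkCone p Q R := by
  rw [walkCone, PointedCone.mem_comap, map_sub, walkForm_C_apply, ← diagonal_smul]
  refine diagonal_sub_mem_localPSDCone (h.isSymm_walkForm f) (fun u => ?_) hR
  calc ∑ v, |walkForm p Q f u v| = p u * ∑ v, |aeval Q f u v| := by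
        simp [walkForm_apply, Finset.mul_sum, abs_mul, abs_of_nonneg (h.nonneg u)]
    _ ≤ p u * a := mul_le_mul_of_nonneg_left (hf u) (h.nonneg u)
    _ = (a • p) u := mul_comm _ _

lemma C_mem_walkCone (h : IsReversibleSignedWalk p K Q) {a : ℝ} (ha : 0 ≤ a) (hR : 2 ≤ R) :
    C a ∈ walkCone p Q R := by
  simpa using h.C_sub_mem_walkCone (f := 0) (a := a) (by simpa using fun _ => ha) hR

lemma one_add_X_pow_mem_walkCone (h : IsReversibleSignedWalk p K Q) (hR : 2 ≤ R) (t : ℕ) :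
    1 + X ^ t ∈ walkCone p Q R := by
  simpa using h.C_sub_mem_walkCone (f := -X ^ t) (a := 1)
    (by simpa using h.sum_abs_pow_le_one t) hR

/-- Each monomial is split into `k` independent walks of coefficient `c i / k`, which divides its
variance by `k`. -/
lemma sq_add_error_mem_walkCone (h : IsReversibleSignedWalk p K Q) {ι : Type*} [Fintype ι]
    (a : ℝ) (c : ι → ℝ) (t : ι → ℕ) (hk : k ≠ 0) (hR2 : 2 ≤ R)
    (hR : Fintype.card ι * k + 1 ≤ R) :
    (C a + ∑ i, c i • X ^ t i) ^ 2 + C (∑ i, 2 * c i ^ 2 / k) ∈ walkCone p Q R := by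
  have hk' : (k : ℝ) ≠ 0 := Nat.cast_ne_zero.2 hk
  have hvar : (C a + ∑ i, c i • X ^ t i) ^ 2 + ∑ i, (c i ^ 2 / k) • (1 - X ^ (2 * t i))
      ∈ walkCone p Q R := by
    convert walkCone_mono (by simpa using hR) (h.sq_add_variances_mem_walkCone (ι := ι × Fin k) a
      (fun i => c i.1 / k) fun i => t i.1) using 1
    simp only [Fintype.sum_prod_type, Finset.sum_const, Finset.card_univ, Fintype.card_fin,
      ← Nat.cast_smul_eq_nsmul ℝ, smul_smul, mul_div_cancel₀ _ hk']
    congr 3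
    ext i : 1
    congr 1
    field_simp
  have hsplit : (C a + ∑ i, c i • X ^ t i) ^ 2 + C (∑ i, 2 * c i ^ 2 / k)
      = (C a + ∑ i, c i • X ^ t i) ^ 2 + ∑ i, (c i ^ 2 / k) • (1 - X ^ (2 * t i))
        + ∑ i, (c i ^ 2 / k) • (1 + X ^ (2 * t i)) := by
    rw [add_assoc, ← Finset.sum_add_distrib, map_sum]
    congr 2
    ext1 i
    rw [← smul_add, sub_add_add_cancel, one_add_one_eq_two, smul_eq_C_mul, mul_div_assoc, mul_comm,
      C_mul, C_ofNat]
  rw [hsplit]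
  exact add_mem hvar (sum_mem fun i _ => PointedCone.smul_mem _ (by positivity)
    (h.one_add_X_pow_mem_walkCone hR2 _))

lemma one_sub_sq_add_error_mem_walkCone (h : IsReversibleSignedWalk p K Q) (c : ℝ) (hk : k ≠ 0)
    (hR : k + 1 ≤ R) : (1 - c • X) ^ 2 + C (2 * c ^ 2 / k) ∈ walkCone p Q R := by
  simpa [sub_eq_add_neg] using
    h.sq_add_error_mem_walkCone 1 (fun _ : Unit => -c) (fun _ => 1) hk (by omega) (by simpa)

lemma pow_sub_pow_sq_add_error_mem_walkCone (h : IsReversibleSignedWalk p K Q) (c : ℝ) (s t : ℕ)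
    (hk : k ≠ 0) (hR : 2 * k + 1 ≤ R) :
    ((c • X) ^ s - (c • X) ^ t) ^ 2 + C (2 * ((c ^ 2) ^ s + (c ^ 2) ^ t) / k)
      ∈ walkCone p Q R := by
  have hwalk := h.sq_add_error_mem_walkCone 0 ![c ^ s, -c ^ t] ![s, t] hk (R := R) (by omega)
    (by simpa using hR)
  simpa [_root_.smul_pow, sub_eq_add_neg, pow_right_comm c, ← add_div, ← mul_add] using hwalk

lemma five_halves_sub_smul_X_mem_walkCone (h : IsReversibleSignedWalk p K Q) {c : ℝ} (hc : 2 ≤ c)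
    {n : ℕ} (hk : (c ^ 2) ^ (n + 1) ≤ k)
    (hQ : ∀ u, c ^ (2 * (n + 1)) * ∑ v, |(Q ^ (2 * (n + 1))) u v| ≤ 1) :
    C (5 / 2) - c • X ∈ walkCone p Q (k * (n + 1) + 1) := by
  have hkpos : 0 < (k : ℝ) := (by positivity : 0 < (c ^ 2) ^ (n + 1)).trans_le hk
  have hk0 : k ≠ 0 := Nat.cast_ne_zero.1 hkpos.ne'
  have hR : k + 1 ≤ k * (n + 1) + 1 := by nlinarith
  have hR2 : 2 ≤ k * (n + 1) + 1 := by omega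
  have hpow : 1 - (c • X) ^ (2 * (n + 1)) ∈ walkCone p Q (k * (n + 1) + 1) := by
    rw [_root_.smul_pow, ← C_1]
    refine h.C_sub_mem_walkCone (fun u => ?_) hR2
    simpa [abs_mul, ← Finset.mul_sum, abs_of_nonneg (zero_le_two.trans hc)] using hQ u
  have hbudget : (2 * c ^ 2 / k + ∑ j ∈ Finset.range n, 2 * ((c ^ 2) ^ j + (c ^ 2) ^ (j + 2)) / k)
      / 2 ≤ 3 / 2 := by
    rw [← Finset.sum_div, ← Finset.mul_sum, ← add_div, ← mul_add, mul_div_assoc,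
      mul_div_cancel_left₀ _ two_ne_zero, div_le_iff₀ hkpos]
    exact (add_sum_range_pow_le (by nlinarith) n).trans (by gcongr)
  have hwalk := algebraMap_sub_mem_of_sq_add_mem (fun a ha => h.C_mem_walkCone ha hR2)
    (fun j => by positivity) (h.one_sub_sq_add_error_mem_walkCone c hk0 hR)
    (fun j hj => h.pow_sub_pow_sq_add_error_mem_walkCone c j (j + 2) hk0 (by nlinarith)) hpow
  convert add_mem hwalk (h.C_mem_walkCone (sub_nonneg.2 hbudget) hR2) using 1
  rw [algebraMap_eq, sub_add_eq_add_sub, ← C_add, add_add_sub_cancel]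
  norm_num

theorem C_sub_X_mem_walkCone (h : IsReversibleSignedWalk p K Q) {ε : ℝ} (hε : 0 < ε) {l : ℕ}
    (hl : l ≠ 0) (hk : (1 / ε) ^ (2 * l) ≤ k)
    (hQ : ∀ u, ∑ v, |(Q ^ (2 * l)) u v| ≤ ε ^ (2 * l)) :
    C (5 * ε / 2) - X ∈ walkCone p Q (k * l + 1) := by
  rcases le_or_gt 1 (5 * ε / 2) with hlarge | hsmall
  · have hk0 : k ≠ 0 := by
      rintro rfl
      exact (by positivity : 0 < (1 / ε) ^ (2 * l)).not_ge (by simpa using hk)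
    refine h.C_sub_mem_walkCone (fun u => ?_) (by simpa [Nat.one_le_iff_ne_zero] using ⟨hk0, hl⟩)
    simpa using (h.sum_abs_pow_le_one 1 u).trans hlarge
  obtain ⟨n, rfl⟩ := Nat.exists_eq_succ_of_ne_zero hl
  have hscaled := h.five_halves_sub_smul_X_mem_walkCone (c := ε⁻¹) (k := k) (n := n)
    ((le_inv_comm₀ two_pos hε).2 (by linarith)) (by simpa [← pow_mul] using hk) fun u => by
      rw [inv_pow, ← div_eq_inv_mul]
      exact div_le_one_of_le₀ (hQ u) (by positivity)
  convert PointedCone.smul_mem _ hε.le hscaled using 1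
  rw [smul_sub, smul_inv_smul₀ hε.ne', smul_C, smul_eq_mul, mul_div_assoc', mul_comm ε]

end IsReversibleSignedWalk

end SignedWalk

section WeightedGraph

variable {V : Type*} [Fintype V]

lemma diagonal_gpi_mul_hadamard_gK [DecidableEq V] {A : Matrix V V ℝ} (hrow : ∀ u, 0 < ∑ v, A u v)
    (Ξ : Matrix V V ℝ) :
    diagonal (gpi A) * hadamard Ξ (gK A) = (gm A)⁻¹ • hadamard Ξ A := by
  ext u v
  have hdeg : gdeg A u ≠ 0 := (hrow u).ne'
  simp only [diagonal_mul, hadamard_apply, Matrix.smul_apply, gpi, gK, of_apply, smul_eq_mul]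
  field_simp

lemma gK_mem_rowStochastic [DecidableEq V] {A : Matrix V V ℝ} (hA0 : ∀ u v, 0 ≤ A u v)
    (hrow : ∀ u, 0 < ∑ v, A u v) : gK A ∈ rowStochastic ℝ V := by
  refine mem_rowStochastic_iff_sum.2 ⟨fun u v => div_nonneg (hA0 u v) (hrow u).le, fun u => ?_⟩
  simp only [gK, of_apply, ← Finset.sum_div]
  exact div_self (hrow u).ne'

lemma gpi_vecMul_gK {A : Matrix V V ℝ} (hA : A.IsSymm) (hrow : ∀ u, 0 < ∑ v, A u v) :
    gpi A ᵥ* gK A = gpi A := by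
  ext v
  have hflow (u : V) : gpi A u * gK A u v = A v u / gm A := by
    have hdeg : gdeg A u ≠ 0 := (hrow u).ne'
    rw [gpi, gK, of_apply, hA.apply u v]
    field_simp
  simp only [vecMul, dotProduct, hflow, ← Finset.sum_div]
  rfl

lemma isReversibleSignedWalk_hadamard_gK [DecidableEq V] {A : Matrix V V ℝ} (hA : A.IsSymm)
    (hA0 : ∀ u v, 0 ≤ A u v) (hrow : ∀ u, 0 < ∑ v, A u v) {Ξ : Matrix V V ℝ} (hΞsym : Ξ.IsSymm)
    (hΞ : ∀ u v, |Ξ u v| ≤ 1) : IsReversibleSignedWalk (gpi A) (gK A) (hadamard Ξ (gK A)) where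
  nonneg u := div_nonneg (hrow u).le (Finset.sum_nonneg fun u _ => (hrow u).le)
  stochastic := gK_mem_rowStochastic hA0 hrow
  stationary := gpi_vecMul_gK hA hrow
  abs_le u v := by
    have hnonneg : 0 ≤ gK A u v := div_nonneg (hA0 u v) (hrow u).le
    rw [hadamard_apply, abs_mul, abs_of_nonneg hnonneg]
    exact mul_le_of_le_one_left hnonneg (hΞ u v)
  isSymm := by
    rw [diagonal_gpi_mul_hadamard_gK hrow]
    exact IsSymm.smul (by rw [IsSymm, transpose_hadamard, hΞsym, hA]) _

lemma sum_abs_row_le_l2opNorm [DecidableEq V] (M : Matrix V V ℝ) (u : V) :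
    ∑ v, |M u v| ≤ l2opNorm M * √(Fintype.card V) := by
  set s : EuclideanSpace ℝ V := WithLp.toLp 2 fun v => (SignType.sign (M u v) : ℝ) with hs
  have hrow : ∑ v, |M u v| = toEuclideanCLM (𝕜 := ℝ) M s u := by
    simp [hs, mulVec, dotProduct, self_mul_sign]
  have hentry (v : V) : ‖s v‖ ^ 2 ≤ 1 := by
    rcases lt_trichotomy (M u v) 0 with h | h | h <;> simp [hs, h]
  have hnorm : ‖s‖ ≤ √(Fintype.card V) := by
    rw [EuclideanSpace.norm_eq]
    refine Real.sqrt_le_sqrt ?_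
    simpa using Finset.sum_le_card_nsmul Finset.univ (fun v => ‖s v‖ ^ 2) 1 fun v _ => hentry v
  calc ∑ v, |M u v| ≤ ‖toEuclideanCLM (𝕜 := ℝ) M s u‖ := hrow.le.trans (le_abs_self _)
    _ ≤ ‖toEuclideanCLM (𝕜 := ℝ) M s‖ := PiLp.norm_apply_le _ _
    _ ≤ l2opNorm M * ‖s‖ := ContinuousLinearMap.le_opNorm _ _
    _ ≤ l2opNorm M * √(Fintype.card V) := mul_le_mul_of_nonneg_left hnorm (norm_nonneg _)

lemma sum_mul_mul_eq_dotProduct_mulVec (Ξ A : Matrix V V ℝ) (x : V → ℝ) :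
    ∑ u, ∑ v, Ξ u v * A u v * x u * x v = x ⬝ᵥ (hadamard Ξ A *ᵥ x) := by
  simp only [dotProduct, mulVec, Finset.mul_sum, hadamard_apply]
  exact Finset.sum_congr rfl fun u _ => Finset.sum_congr rfl fun v _ => by ring

variable [Nonempty V]

lemma gm_pos {A : Matrix V V ℝ} (hrow : ∀ u, 0 < ∑ v, A u v) : 0 < gm A :=
  Finset.sum_pos (fun u _ => hrow u) Finset.univ_nonempty

lemma gpi_pos {A : Matrix V V ℝ} (hrow : ∀ u, 0 < ∑ v, A u v) (u : V) : 0 < gpi A u :=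
  div_pos (hrow u) (gm_pos hrow)

lemma sum_gpi {A : Matrix V V ℝ} (hrow : ∀ u, 0 < ∑ v, A u v) : ∑ u, gpi A u = 1 := by
  simp only [gpi, ← Finset.sum_div]
  exact div_self (gm_pos hrow).ne'

lemma gpiStar_pos {A : Matrix V V ℝ} (hrow : ∀ u, 0 < ∑ v, A u v) : 0 < gpiStar A :=
  (Finset.lt_inf'_iff _).2 fun u _ => gpi_pos hrow u

lemma card_mul_gpiStar_le_one {A : Matrix V V ℝ} (hrow : ∀ u, 0 < ∑ v, A u v) :
    Fintype.card V * gpiStar A ≤ 1 := by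
  rw [← sum_gpi hrow, ← nsmul_eq_mul, ← Finset.card_univ]
  exact Finset.card_nsmul_le_sum _ _ _ fun u hu => Finset.inf'_le _ hu

lemma gpiStar_le_one {A : Matrix V V ℝ} (hrow : ∀ u, 0 < ∑ v, A u v) : gpiStar A ≤ 1 :=
  (le_mul_of_one_le_left (gpiStar_pos hrow).le (by exact_mod_cast Fintype.card_pos)).trans
    (card_mul_gpiStar_le_one hrow)

lemma isLocalPSDSum_sub_hadamard [DecidableEq V] {A : Matrix V V ℝ} (hA : A.IsSymm)
    (hA0 : ∀ u v, 0 ≤ A u v) (hrow : ∀ u, 0 < ∑ v, A u v) {Ξ : Matrix V V ℝ} (hΞsym : Ξ.IsSymm)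
    (hΞ : ∀ u v, |Ξ u v| ≤ 1) {ε : ℝ} (hε : 0 < ε) {l k : ℕ} (hl : l ≠ 0)
    (hk : (1 / ε) ^ (2 * l) ≤ k)
    (hop : l2opNorm ((hadamard Ξ (gK A)) ^ (2 * l)) ≤ ε ^ (2 * l) * √(gpiStar A)) :
    IsLocalPSDSum (k * l + 1)
      ((5 * ε / 2) • diagonal (gpi A) - (gm A)⁻¹ • hadamard Ξ A) := by
  have hwalk := isReversibleSignedWalk_hadamard_gK hA hA0 hrow hΞsym hΞ
  have hrows (u : V) : ∑ v, |((hadamard Ξ (gK A)) ^ (2 * l)) u v| ≤ ε ^ (2 * l) := by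
    refine (sum_abs_row_le_l2opNorm _ u).trans ?_
    calc _ ≤ ε ^ (2 * l) * √(gpiStar A) * √(Fintype.card V) := by gcongr
      _ = ε ^ (2 * l) * √(Fintype.card V * gpiStar A) := by
        rw [mul_assoc, ← Real.sqrt_mul (gpiStar_pos hrow).le, mul_comm (gpiStar A)]
      _ ≤ ε ^ (2 * l) := mul_le_of_le_one_right (by positivity)
        (Real.sqrt_le_one.2 (card_mul_gpiStar_le_one hrow))
  have hmem : walkForm (gpi A) (hadamard Ξ (gK A)) (C (5 * ε / 2) - X)
      ∈ localPSDCone V (k * l + 1) := hwalk.C_sub_X_mem_walkCone hε hl hk hrows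
  rwa [map_sub, walkForm_C_apply, walkForm_apply, aeval_X, diagonal_gpi_mul_hadamard_gK hrow]
    at hmem

lemma dotProduct_mulVec_le_of_isLocalPSDSum [DecidableEq V] {A : Matrix V V ℝ}
    (hrow : ∀ u, 0 < ∑ v, A u v) {c : ℝ} (hc : 0 ≤ c) {R : ℕ} {B : Matrix V V ℝ}
    (hB : IsLocalPSDSum R (c • diagonal (gpi A) - (gm A)⁻¹ • B)) {x : V → ℝ}
    (hx : ∀ u, |x u| ≤ 1) : x ⬝ᵥ (B *ᵥ x) ≤ c * gm A := by
  have hdiag : x ⬝ᵥ (diagonal (gpi A) *ᵥ x) ≤ 1 := by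
    rw [← sum_gpi hrow]
    refine Finset.sum_le_sum fun u _ => ?_
    calc x u * (diagonal (gpi A) *ᵥ x) u = gpi A u * x u ^ 2 := by rw [mulVec_diagonal]; ring
      _ ≤ gpi A u := mul_le_of_le_one_right (gpi_pos hrow u).le
        ((sq_le_one_iff_abs_le_one _).2 (hx u))
  have hnonneg := hB.dotProduct_mulVec_nonneg x
  rw [sub_mulVec, dotProduct_sub, smul_mulVec, smul_mulVec, dotProduct_smul, dotProduct_smul,
    sub_nonneg, smul_eq_mul, smul_eq_mul, inv_mul_le_iff₀ (gm_pos hrow), mul_comm] at hnonneg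
  exact hnonneg.trans (by gcongr; exacts [(gm_pos hrow).le, mul_le_of_le_one_right hc hdiag])

end WeightedGraph

section WalkLength

variable {ρ ε s : ℝ} {l : ℕ}

lemma ceil_log_div_log_ne_zero (hρ : 0 < ρ) (hρε : ρ < ε) (hs : 0 < s) (hεs : ε ^ 2 * s < 1) :
    ⌈Real.log (1 / (ε ^ 2 * s)) / (4 * Real.log (ε / ρ))⌉₊ ≠ 0 := by
  have hε : 0 < ε := hρ.trans hρε
  refine (Nat.ceil_pos.2 (div_pos (Real.log_pos ?_) (mul_pos four_pos (Real.log_pos ?_)))).ne'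
  · exact (one_lt_div (by positivity)).2 hεs
  · exact (one_lt_div hρ).2 hρε

lemma pow_le_pow_mul_sqrt_of_log_div_log_le (hρ : 0 < ρ) (hρε : ρ < ε) (hε1 : ε ≤ 1) (hs : 0 < s)
    (hl : Real.log (1 / (ε ^ 2 * s)) / (4 * Real.log (ε / ρ)) ≤ l) :
    ρ ^ (2 * l) ≤ ε ^ (2 * l) * √s := by
  have hε : 0 < ε := hρ.trans hρε
  have hlog : 0 < Real.log (ε / ρ) := Real.log_pos ((one_lt_div hρ).2 hρε)
  rw [div_le_iff₀ (by positivity)] at hl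
  have hratio : 1 / (ε ^ 2 * s) ≤ (ε / ρ) ^ (4 * l) := by
    rw [← Real.log_le_log_iff (by positivity) (by positivity), Real.log_pow]
    push_cast
    linarith
  rw [div_pow, div_le_div_iff₀ (by positivity) (by positivity), one_mul] at hratio
  refine (sq_le_sq₀ (by positivity) (by positivity)).1 ?_
  calc (ρ ^ (2 * l)) ^ 2 = ρ ^ (4 * l) := by ring
    _ ≤ ε ^ (4 * l) * (ε ^ 2 * s) := hratio
    _ ≤ ε ^ (4 * l) * s := by gcongr; exact mul_le_of_le_one_left hs.le (pow_le_one₀ hε.le hε1)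
    _ = (ε ^ (2 * l) * √s) ^ 2 := by rw [mul_pow, Real.sq_sqrt hs.le]; ring

end WalkLength

theorem sa_2xor_refutation_general {V : Type*} [Fintype V] [DecidableEq V] [Nonempty V]
    (A : Matrix V V ℝ) (hA : A.IsSymm) (hA0 : ∀ u v, 0 ≤ A u v)
    (hrow : ∀ u, 0 < ∑ v, A u v)
    (Ξ : Matrix V V ℝ) (hΞsym : Ξ.IsSymm) (hΞ : ∀ u v, |Ξ u v| ≤ 1)
    (ε : ℝ) (hε : 0 < ε) (l k : ℕ) (hl : l ≠ 0) (hk : (1 / ε) ^ (2 * l) ≤ k)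
    (hop : l2opNorm ((hadamard Ξ (gK A)) ^ (2 * l)) ≤ ε ^ (2 * l) * √(gpiStar A)) :
    IsLocalPSDSum (k * l + 1)
      ((5 * ε / 2) • diagonal (gpi A) - (gm A)⁻¹ • hadamard Ξ A) ∧
    IsLocalPSDSum (k * l + 1)
      ((5 * ε / 2) • diagonal (gpi A) + (gm A)⁻¹ • hadamard Ξ A) ∧
    ∀ x : V → ℝ, (∀ u, |x u| ≤ 1) →
      |∑ u, ∑ v, Ξ u v * A u v * x u * x v| ≤ (5 * ε / 2) * gm A ∧
      1 / 2 + (1 / (2 * gm A)) * ∑ u, ∑ v, Ξ u v * A u v * x u * x v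
        ≤ 1 / 2 + (5 / 4) * ε := by
  have hneg (B : Matrix V V ℝ) : hadamard (-Ξ) B = -hadamard Ξ B := by
    ext u v
    simp
  have hsub := isLocalPSDSum_sub_hadamard hA hA0 hrow hΞsym hΞ hε hl hk hop
  have hadd := isLocalPSDSum_sub_hadamard hA hA0 hrow hΞsym.neg (by simpa using hΞ) hε hl hk
    (by rwa [hneg, (even_two_mul l).neg_pow])
  rw [hneg] at hadd
  refine ⟨hsub, by simpa using hadd, fun x hx => ?_⟩
  have hupp := dotProduct_mulVec_le_of_isLocalPSDSum hrow (by positivity) hsub hx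
  have hlow := dotProduct_mulVec_le_of_isLocalPSDSum hrow (by positivity) hadd hx
  rw [neg_mulVec, dotProduct_neg] at hlow
  rw [sum_mul_mul_eq_dotProduct_mulVec]
  refine ⟨abs_le'.2 ⟨hupp, hlow⟩, add_le_add_right ?_ _⟩
  have hm := gm_pos hrow
  rw [one_div, inv_mul_le_iff₀ (by positivity)]
  linarith

theorem sa_2xor_refutation {V : Type*} [Fintype V] [DecidableEq V] [Nonempty V]
    (A : Matrix V V ℝ) (hA : A.IsSymm) (hA0 : ∀ u v, 0 ≤ A u v)
    (hrow : ∀ u, 0 < ∑ v, A u v)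
    (Ξ : Matrix V V ℝ) (hΞsym : Ξ.IsSymm) (hΞ : ∀ u v, Ξ u v = 1 ∨ Ξ u v = -1)
    (ρ ε : ℝ) (hρ : 0 < ρ) (hρε : ρ < ε) (hε : ε ≤ 1 / Real.sqrt 3)
    (l k : ℕ)
    (hl : l = ⌈Real.log (1 / (ε ^ 2 * gpiStar A)) / (4 * Real.log (ε / ρ))⌉₊)
    (hk : k = ⌈(1 / ε) ^ (2 * l)⌉₊)
    (hop : l2opNorm ((Matrix.hadamard Ξ (gK A)) ^ (2 * l)) ≤ ρ ^ (2 * l)) :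
    IsLocalPSDSum (k * l + 1)
      ((5 * ε / 2) • Matrix.diagonal (gpi A) - (gm A)⁻¹ • Matrix.hadamard Ξ A) ∧
    IsLocalPSDSum (k * l + 1)
      ((5 * ε / 2) • Matrix.diagonal (gpi A) + (gm A)⁻¹ • Matrix.hadamard Ξ A) ∧
    ∀ x : V → ℝ, (∀ u, x u = 1 ∨ x u = -1) →
      |∑ u, ∑ v, Ξ u v * A u v * x u * x v| ≤ (5 * ε / 2) * gm A ∧
      1 / 2 + (1 / (2 * gm A)) * ∑ u, ∑ v, Ξ u v * A u v * x u * x v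
        ≤ 1 / 2 + (5 / 4) * ε := by
  have hε0 : 0 < ε := hρ.trans hρε
  have hε1 : ε < 1 := hε.trans_lt
    ((div_lt_one (by positivity)).2 (Real.lt_sqrt_of_sq_lt (by norm_num)))
  have hs := gpiStar_pos hrow
  have hl0 : l ≠ 0 := hl ▸ ceil_log_div_log_ne_zero hρ hρε hs
    (mul_lt_one_of_nonneg_of_lt_one_left (by positivity) (pow_lt_one₀ hε0.le hε1 two_ne_zero)
      (gpiStar_le_one hrow))
  obtain ⟨hsub, hadd, hvalue⟩ := sa_2xor_refutation_general A hA hA0 hrow Ξ hΞsym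
    (fun u v => ((abs_eq zero_le_one).2 (hΞ u v)).le) ε hε0 l k hl0 (hk ▸ Nat.le_ceil _)
    (hop.trans (pow_le_pow_mul_sqrt_of_log_div_log_le hρ hρε hε1.le hs (hl ▸ Nat.le_ceil _)))
  exact ⟨hsub, hadd, fun x hx => hvalue x fun u => ((abs_eq zero_le_one).2 (hx u)).le⟩
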